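/- Let ζ := exp(2πi/7) ∈ ℂ and for k ∈ ℤ set T(k) := ζ^{6k}/((1-ζ)(1-ζ³)) + ζ^{5k}/((1-ζ²)(1-ζ⁶)) + ζ^{3k}/((1-ζ⁴)(1-ζ⁵)). Then T(k+7) = T(k) for all k ∈ ℤ, and T(0) = 1, T(1) = 0, T(2) = 0, T(3) = 1, T(4) = ζ³ + ζ⁵ + ζ⁶, T(5) = -1, T(6) = ζ + ζ² + ζ⁴. -/

import Mathlib

/-- The reciprocal of `(1 - x) * (1 - x ^ 3)` at a root of the seventh cyclotomic polynomial. -/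
theorem div_one_sub_mul_one_sub_cube {K : Type*} [Field K] [CharZero K] {x : K}
    (hx : 1 + x + x ^ 2 + x ^ 3 + x ^ 4 + x ^ 5 + x ^ 6 = 0) (a : K) :
    a / ((1 - x) * (1 - x ^ 3)) = a * ((3 + x + x ^ 2 + 3 * x ^ 3 - x ^ 5) / 7) := by
  have h : (1 - x) * (1 - x ^ 3) * ((3 + x + x ^ 2 + 3 * x ^ 3 - x ^ 5) / 7) = 1 := by
    grind
  rw [div_eq_mul_inv, inv_eq_of_mul_eq_one_right h]

theorem lefschetz_numbers_order_seven (ζ : ℂ) (T : ℤ → ℂ)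
    (hζ : ζ = Complex.exp (2 * Real.pi * Complex.I / 7))
    (hT : ∀ k : ℤ, T k =
      ζ ^ (6 * k) / ((1 - ζ) * (1 - ζ ^ 3)) +
      ζ ^ (5 * k) / ((1 - ζ ^ 2) * (1 - ζ ^ 6)) +
      ζ ^ (3 * k) / ((1 - ζ ^ 4) * (1 - ζ ^ 5))) :
    (∀ k : ℤ, T (k + 7) = T k) ∧
    T 0 = 1 ∧ T 1 = 0 ∧ T 2 = 0 ∧ T 3 = 1 ∧
    T 4 = ζ ^ 3 + ζ ^ 5 + ζ ^ 6 ∧ T 5 = -1 ∧ T 6 = ζ + ζ ^ 2 + ζ ^ 4 := by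
  have hprim : IsPrimitiveRoot ζ 7 := by
    rw [hζ]
    exact_mod_cast Complex.isPrimitiveRoot_exp 7 (by norm_num)
  have h7 : ζ ^ 7 = 1 := hprim.pow_eq_one
  have h0 : ζ ≠ 0 := hprim.ne_zero (by norm_num)
  have hΦ : 1 + ζ + ζ ^ 2 + ζ ^ 3 + ζ ^ 4 + ζ ^ 5 + ζ ^ 6 = 0 := by
    simpa [Finset.sum_range_succ] using hprim.geom_sum_eq_zero (by norm_num)
  have hper (m k : ℤ) : ζ ^ (m * (k + 7)) = ζ ^ (m * k) := by
    have h7' : ζ ^ (7 : ℤ) = 1 := by exact_mod_cast h7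
    rw [mul_add, zpow_add₀ h0, mul_comm m 7, zpow_mul ζ 7, h7', one_zpow, mul_one]
  have hsq (a : ℂ) := div_one_sub_mul_one_sub_cube (x := ζ ^ 2) (by grind) a
  have hfourth (a : ℂ) := div_one_sub_mul_one_sub_cube (x := ζ ^ 4) (by grind) a
  have h12 : (ζ ^ 4) ^ 3 = ζ ^ 5 := by grind
  have h6 : (ζ ^ 2) ^ 3 = ζ ^ 6 := by ring
  rw [h6] at hsq
  rw [h12] at hfourth
  have hT' (n : ℕ) : T n =
      ζ ^ (6 * n) * ((3 + ζ + ζ ^ 2 + 3 * ζ ^ 3 - ζ ^ 5) / 7) +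
      ζ ^ (5 * n) * ((3 + ζ ^ 2 + ζ ^ 4 + 3 * ζ ^ 6 - ζ ^ 3) / 7) +
      ζ ^ (3 * n) * ((3 + ζ ^ 4 + ζ + 3 * ζ ^ 5 - ζ ^ 6) / 7) := by
    rw [hT, div_one_sub_mul_one_sub_cube hΦ, hsq, hfourth]
    have e10 : (ζ ^ 2) ^ 5 = ζ ^ 3 := by grind
    have e8 : (ζ ^ 4) ^ 2 = ζ := by grind
    have e20 : (ζ ^ 4) ^ 5 = ζ ^ 6 := by grind
    rw [e10, e8, e20, ← pow_mul ζ 2 2]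
    norm_cast
  refine ⟨fun k => by simp only [hT, hper], ?_, ?_, ?_, ?_, ?_, ?_, ?_⟩
  · have := hT' 0
    push_cast at this
    grind
  · have := hT' 1
    push_cast at this
    grind
  · have := hT' 2
    push_cast at this
    grind
  · have := hT' 3
    push_cast at this
    grind
  · have := hT' 4
    push_cast at this
    grind
  · have := hT' 5
    push_cast at this
    grind
  · have := hT' 6
    push_cast at this
    grind
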